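/- Let A ∈ ℝ^{n×n} be nonsingular, 1 ≤ k ≤ d(A) − 1, and let b ∈ ℝ^n be a unit norm k-th worst-case GMRES initial vector with k-th GMRES polynomial p_k and residual r_k = p_k(A)b. If q_k ∈ π_k is the k-th GMRES polynomial of Aᵀ and the initial vector r_k/‖r_k‖, then q_k(Aᵀ) p_k(A) b = Ψ_k(A)² b, i.e., b is an eigenvector of q_k(Aᵀ)p_k(A) with eigenvalue Ψ_k(A)². -/

import Mathlib

open Polynomial Matrix

/-- The Euclidean norm of a real vector. -/
noncomputable def euclNorm {ι : Type*} [Fintype ι] (v : ι → ℝ) : ℝ :=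
  Real.sqrt (∑ i, v i ^ 2)

/-- The Euclidean norm of a complex vector. -/
noncomputable def euclNormC {ι : Type*} [Fintype ι] (v : ι → ℂ) : ℝ :=
  Real.sqrt (∑ i, ‖v i‖ ^ 2)

/-- The Euclidean inner product of two real vectors. -/
noncomputable def edot {ι : Type*} [Fintype ι] (u v : ι → ℝ) : ℝ := ∑ i, u i * v i

/-- `p ∈ π_k`: real polynomials of degree at most `k` with value `1` at the origin. -/
def IsPik (k : ℕ) (p : Polynomial ℝ) : Prop := p.natDegree ≤ k ∧ p.eval 0 = 1

/-- `p ∈ π_{k,ℂ}`: complex polynomials of degree at most `k` with value `1` at the origin. -/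
def IsPikC (k : ℕ) (p : Polynomial ℂ) : Prop := p.natDegree ≤ k ∧ p.eval 0 = 1

/-- The `k`-th GMRES residual norm `min_{p ∈ π_k} ‖p(A)v‖`. -/
noncomputable def gmresVal {ι : Type*} [Fintype ι] [DecidableEq ι]
    (A : Matrix ι ι ℝ) (k : ℕ) (v : ι → ℝ) : ℝ :=
  sInf {s : ℝ | ∃ p : Polynomial ℝ, IsPik k p ∧ s = euclNorm ((Polynomial.aeval A p).mulVec v)}

/-- The `k`-th worst-case GMRES approximation `Ψ_k(A) = max_{‖v‖=1} min_{p ∈ π_k} ‖p(A)v‖`. -/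
noncomputable def Psi {ι : Type*} [Fintype ι] [DecidableEq ι]
    (A : Matrix ι ι ℝ) (k : ℕ) : ℝ :=
  sSup {r : ℝ | ∃ v : ι → ℝ, euclNorm v = 1 ∧ r = gmresVal A k v}

/-- `d(A)`: the degree of the minimal polynomial of `A`. -/
noncomputable def dA {ι : Type*} [Fintype ι] [DecidableEq ι] (A : Matrix ι ι ℝ) : ℕ :=
  (minpoly ℝ A).natDegree

/-- `d(A,b)`: the smallest degree of a nonzero polynomial `q` with `q(A)b = 0`. -/
noncomputable def dAb {ι : Type*} [Fintype ι] [DecidableEq ι]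
    (A : Matrix ι ι ℝ) (b : ι → ℝ) : ℕ :=
  sInf {d : ℕ | ∃ q : Polynomial ℝ, q ≠ 0 ∧ q.natDegree = d ∧ (Polynomial.aeval A q).mulVec b = 0}

/-- `r = GMRES(A,b,k)`: `r = p(A)b` for some `p ∈ π_k` minimizing `‖p(A)b‖` over `π_k`. -/
def IsGmresRes {ι : Type*} [Fintype ι] [DecidableEq ι]
    (A : Matrix ι ι ℝ) (k : ℕ) (b r : ι → ℝ) : Prop :=
  ∃ p : Polynomial ℝ, IsPik k p ∧ r = (Polynomial.aeval A p).mulVec b ∧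
    ∀ q : Polynomial ℝ, IsPik k q → euclNorm r ≤ euclNorm ((Polynomial.aeval A q).mulVec b)

/-- `p` is the `k`-th GMRES polynomial of `A` and `b`: `p ∈ π_k` minimizes `‖p(A)b‖`. -/
def IsGmresPoly {ι : Type*} [Fintype ι] [DecidableEq ι]
    (A : Matrix ι ι ℝ) (k : ℕ) (b : ι → ℝ) (p : Polynomial ℝ) : Prop :=
  IsPik k p ∧ ∀ q : Polynomial ℝ, IsPik k q →
    euclNorm ((Polynomial.aeval A p).mulVec b) ≤ euclNorm ((Polynomial.aeval A q).mulVec b)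

/-- The Krylov subspace `K_k(A,b) = span{b, Ab, …, A^{k-1}b}`. -/
noncomputable def krylov {ι : Type*} [Fintype ι] [DecidableEq ι]
    (A : Matrix ι ι ℝ) (k : ℕ) (b : ι → ℝ) : Submodule ℝ (ι → ℝ) :=
  Submodule.span ℝ (Set.range fun i : Fin k => (A ^ (i : ℕ)).mulVec b)

/-- `b` satisfies the cross equality for `A` and step `k`. -/
def CrossEq {ι : Type*} [Fintype ι] [DecidableEq ι]
    (A : Matrix ι ι ℝ) (k : ℕ) (b : ι → ℝ) : Prop :=
  ∀ r s : ι → ℝ, IsGmresRes A k b r → IsGmresRes Aᵀ k ((euclNorm r)⁻¹ • r) s →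
    b = (euclNorm s)⁻¹ • s

/-- The Krylov matrix `K(v) = [Av, A²v, …, A^k v]`. -/
noncomputable def Kmat {n : ℕ} (A : Matrix (Fin n) (Fin n) ℝ) (k : ℕ) (v : Fin n → ℝ) :
    Matrix (Fin n) (Fin k) ℝ :=
  Matrix.of fun i j => (A ^ ((j : ℕ) + 1)).mulVec v i

/-- `γ(v) = (K(v)ᵀK(v))⁻¹ K(v)ᵀ v`. -/
noncomputable def gammaVec {n : ℕ} (A : Matrix (Fin n) (Fin n) ℝ) (k : ℕ) (v : Fin n → ℝ) :
    Fin k → ℝ :=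
  ((Kmat A k v)ᵀ * Kmat A k v)⁻¹ *ᵥ ((Kmat A k v)ᵀ *ᵥ v)

/-- `g(v) = min_{c ∈ ℝ^k} ‖v - K(v)c‖²`. -/
noncomputable def gFun {n : ℕ} (A : Matrix (Fin n) (Fin n) ℝ) (k : ℕ) (v : Fin n → ℝ) : ℝ :=
  sInf {s : ℝ | ∃ c : Fin k → ℝ, s = euclNorm (v - Kmat A k v *ᵥ c) ^ 2}

/-- `p(z; c) = 1 - ∑_{j=1}^k c_j z^j`. -/
noncomputable def pPoly {k : ℕ} (c : Fin k → ℝ) : Polynomial ℝ :=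
  1 - ∑ j : Fin k, Polynomial.C (c j) * Polynomial.X ^ ((j : ℕ) + 1)

/-- `f(c,v) = ‖p(A;c)v‖²`. -/
noncomputable def fFun {n k : ℕ} (A : Matrix (Fin n) (Fin n) ℝ) (c : Fin k → ℝ)
    (v : Fin n → ℝ) : ℝ :=
  euclNorm ((Polynomial.aeval A (pPoly c)).mulVec v) ^ 2

/-- `F(c,v) = f(c,v)/(vᵀv)`. -/
noncomputable def FFun {n k : ℕ} (A : Matrix (Fin n) (Fin n) ℝ) (c : Fin k → ℝ)
    (v : Fin n → ℝ) : ℝ :=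
  fFun A c v / edot v v

/-- The Toh matrix `A(ω, ε)`. -/
noncomputable def tohMatrix (ω ε : ℝ) : Matrix (Fin 4) (Fin 4) ℝ :=
  !![1, ε, 0, 0; 0, -1, ω / ε, 0; 0, 0, 1, ε; 0, 0, 0, -1]

/-- `p` is a `k`-th worst-case GMRES polynomial of `A`. -/
def IsWCPoly {ι : Type*} [Fintype ι] [DecidableEq ι]
    (A : Matrix ι ι ℝ) (k : ℕ) (p : Polynomial ℝ) : Prop :=
  IsPik k p ∧ ∃ b : ι → ℝ, euclNorm b = 1 ∧
    (∀ q : Polynomial ℝ, IsPik k q →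
      euclNorm ((Polynomial.aeval A p).mulVec b) ≤ euclNorm ((Polynomial.aeval A q).mulVec b)) ∧
    euclNorm ((Polynomial.aeval A p).mulVec b) = Psi A k

/-- The spectral (Euclidean operator) norm of a real matrix. -/
noncomputable def specNorm {ι : Type*} [Fintype ι] (M : Matrix ι ι ℝ) : ℝ :=
  sSup {r : ℝ | ∃ v : ι → ℝ, euclNorm v = 1 ∧ r = euclNorm (M *ᵥ v)}

/-- The `k`-th ideal GMRES approximation `φ_k(A) = min_{p ∈ π_k} ‖p(A)‖`. -/
noncomputable def phiIdeal {ι : Type*} [Fintype ι] [DecidableEq ι]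
    (A : Matrix ι ι ℝ) (k : ℕ) : ℝ :=
  sInf {r : ℝ | ∃ p : Polynomial ℝ, IsPik k p ∧ r = specNorm (Polynomial.aeval A p)}

/-- Complexification of a real matrix. -/
noncomputable def matC {ι : Type*} (A : Matrix ι ι ℝ) : Matrix ι ι ℂ :=
  A.map fun x => (x : ℂ)

/-- Complexification of a real vector. -/
noncomputable def vecC {ι : Type*} (b : ι → ℝ) : ι → ℂ := fun i => (b i : ℂ)

/-- `Ψ_{k,ℂ,ℝ}(A)`: complex polynomials, real initial vectors. -/
noncomputable def PsiCR {ι : Type*} [Fintype ι] [DecidableEq ι]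
    (A : Matrix ι ι ℝ) (k : ℕ) : ℝ :=
  sSup {r : ℝ | ∃ b : ι → ℝ, euclNorm b = 1 ∧
    r = sInf {s : ℝ | ∃ p : Polynomial ℂ, IsPikC k p ∧
      s = euclNormC ((Polynomial.aeval (matC A) p).mulVec (vecC b))}}

/-- `Ψ_{k,ℂ,ℂ}(A)`: complex polynomials, complex initial vectors. -/
noncomputable def PsiCC {ι : Type*} [Fintype ι] [DecidableEq ι]
    (A : Matrix ι ι ℝ) (k : ℕ) : ℝ :=
  sSup {r : ℝ | ∃ b : ι → ℂ, euclNormC b = 1 ∧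
    r = sInf {s : ℝ | ∃ p : Polynomial ℂ, IsPikC k p ∧
      s = euclNormC ((Polynomial.aeval (matC A) p).mulVec b)}}

/-- `Ψ_{k,ℝ,ℂ}(A)`: real polynomials, complex initial vectors. -/
noncomputable def PsiRC {ι : Type*} [Fintype ι] [DecidableEq ι]
    (A : Matrix ι ι ℝ) (k : ℕ) : ℝ :=
  sSup {r : ℝ | ∃ b : ι → ℂ, euclNormC b = 1 ∧
    r = sInf {s : ℝ | ∃ p : Polynomial ℝ, IsPik k p ∧
      s = euclNormC ((Polynomial.aeval (matC A) (p.map (algebraMap ℝ ℂ))).mulVec b)}}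

/-- `φ_{k,ℝ,ℝ}(A)`. -/
noncomputable def phiRR {ι : Type*} [Fintype ι] [DecidableEq ι]
    (A : Matrix ι ι ℝ) (k : ℕ) : ℝ :=
  sInf {r : ℝ | ∃ p : Polynomial ℝ, IsPik k p ∧
    r = sSup {s : ℝ | ∃ b : ι → ℝ, euclNorm b = 1 ∧
      s = euclNorm ((Polynomial.aeval A p).mulVec b)}}

/-- `φ_{k,ℂ,ℝ}(A)`. -/
noncomputable def phiCR {ι : Type*} [Fintype ι] [DecidableEq ι]
    (A : Matrix ι ι ℝ) (k : ℕ) : ℝ :=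
  sInf {r : ℝ | ∃ p : Polynomial ℂ, IsPikC k p ∧
    r = sSup {s : ℝ | ∃ b : ι → ℝ, euclNorm b = 1 ∧
      s = euclNormC ((Polynomial.aeval (matC A) p).mulVec (vecC b))}}

/-- `φ_{k,ℝ,ℂ}(A)`. -/
noncomputable def phiRC {ι : Type*} [Fintype ι] [DecidableEq ι]
    (A : Matrix ι ι ℝ) (k : ℕ) : ℝ :=
  sInf {r : ℝ | ∃ p : Polynomial ℝ, IsPik k p ∧
    r = sSup {s : ℝ | ∃ b : ι → ℂ, euclNormC b = 1 ∧
      s = euclNormC ((Polynomial.aeval (matC A) (p.map (algebraMap ℝ ℂ))).mulVec b)}}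

/-- `φ_{k,ℂ,ℂ}(A)`. -/
noncomputable def phiCC {ι : Type*} [Fintype ι] [DecidableEq ι]
    (A : Matrix ι ι ℝ) (k : ℕ) : ℝ :=
  sInf {r : ℝ | ∃ p : Polynomial ℂ, IsPikC k p ∧
    r = sSup {s : ℝ | ∃ b : ι → ℂ, euclNormC b = 1 ∧
      s = euclNormC ((Polynomial.aeval (matC A) p).mulVec b)}}

/-!
Minimality of a GMRES residual `p(A)v` means that `⟨p(A)v, q(A)v⟩ = ‖p(A)v‖²` for all
`q ∈ π_k`. For a GMRES residual `s = q(Aᵀ)r` of the transpose this gives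
`‖s‖² = ⟨p(A)s, r⟩ ≤ ‖p(A)s‖ ‖r‖` for all `p ∈ π_k`, and minimizing over `p` yields
`‖s‖ ≤ Ψ_k(A) ‖r‖`. If `r = p_k(A)b` is a worst-case residual, then `‖s‖ ≤ Ψ_k(A)² ‖b‖`, while
orthogonality gives `⟨b, s⟩ = ⟨q(A)b, r⟩ = ‖r‖² = Ψ_k(A)² ‖b‖²`. This is the equality case of the
Cauchy–Schwarz inequality, so `s = Ψ_k(A)² b`.
-/

open scoped RealInnerProductSpace

theorem inner_eq_norm_sq_of_forall_norm_le_norm_lineMap {E : Type*} [NormedAddCommGroup E]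
    [InnerProductSpace ℝ E] {x y : E} (h : ∀ t : ℝ, ‖x‖ ≤ ‖AffineMap.lineMap x y t‖) :
    ⟪x, y⟫ = ‖x‖ ^ 2 := by
  have hmin : ‖x - 0‖ = ⨅ w : ℝ ∙ (x - y), ‖x - w‖ := by
    refine le_antisymm (le_ciInf fun ⟨w, hw⟩ => ?_) (ciInf_le ⟨0, ?_⟩ (0 : ℝ ∙ (x - y)))
    · obtain ⟨t, rfl⟩ := Submodule.mem_span_singleton.mp hw
      have hline : x - t • (x - y) = AffineMap.lineMap x y t := by
        rw [AffineMap.lineMap_apply_module]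
        module
      simpa only [sub_zero, hline] using h t
    · rintro _ ⟨w, rfl⟩
      exact norm_nonneg _
  have horth : ⟪x, x - y⟫ = 0 := by
    simpa only [sub_zero] using
      (Submodule.norm_eq_iInf_iff_real_inner_eq_zero _ (zero_mem _)).mp hmin _
        (Submodule.mem_span_singleton_self (x - y))
  exact inner_eq_norm_sq_left_iff.mpr horth

section Transpose

variable {R S ι : Type*} [CommSemiring R] [CommSemiring S] [Algebra R S] [Fintype ι] [DecidableEq ι]

theorem aeval_transpose (A : Matrix ι ι S) (p : R[X]) : aeval Aᵀ p = (aeval A p)ᵀ :=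
  MulOpposite.op_injective <| (aeval_op_apply Aᵀ p).symm.trans <|
    aeval_algHom_apply (transposeAlgEquiv ι R S : Matrix ι ι S →ₐ[R] (Matrix ι ι S)ᵐᵒᵖ) A p

theorem aeval_mulVec_dotProduct (A : Matrix ι ι S) (p : R[X]) (v w : ι → S) :
    aeval A p *ᵥ v ⬝ᵥ w = v ⬝ᵥ aeval Aᵀ p *ᵥ w := by
  rw [aeval_transpose, dotProduct_mulVec, vecMul_transpose]

end Transpose

section EuclideanNorm

variable {ι : Type*} [Fintype ι]

theorem euclNorm_eq_norm (v : ι → ℝ) : euclNorm v = ‖WithLp.toLp 2 v‖ := by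
  simp only [euclNorm, EuclideanSpace.norm_eq, Real.norm_eq_abs, sq_abs]

theorem dotProduct_eq_inner (v w : ι → ℝ) : v ⬝ᵥ w = ⟪WithLp.toLp 2 v, WithLp.toLp 2 w⟫ := by
  rw [EuclideanSpace.inner_toLp_toLp, star_trivial, dotProduct_comm]

theorem euclNorm_nonneg (v : ι → ℝ) : 0 ≤ euclNorm v :=
  Real.sqrt_nonneg _

theorem euclNorm_eq_zero {v : ι → ℝ} : euclNorm v = 0 ↔ v = 0 := by
  rw [euclNorm_eq_norm, norm_eq_zero, WithLp.toLp_eq_zero]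

theorem euclNorm_zero : euclNorm (0 : ι → ℝ) = 0 :=
  euclNorm_eq_zero.mpr rfl

theorem euclNorm_pos {v : ι → ℝ} (hv : v ≠ 0) : 0 < euclNorm v :=
  (euclNorm_nonneg v).lt_of_ne' (euclNorm_eq_zero.not.mpr hv)

theorem euclNorm_smul (c : ℝ) (v : ι → ℝ) : euclNorm (c • v) = |c| * euclNorm v := by
  rw [euclNorm_eq_norm, euclNorm_eq_norm, WithLp.toLp_smul, norm_smul, Real.norm_eq_abs]

theorem euclNorm_inv_smul_self {v : ι → ℝ} (hv : v ≠ 0) :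
    euclNorm ((euclNorm v)⁻¹ • v) = 1 := by
  rw [euclNorm_smul, abs_of_pos (inv_pos.mpr (euclNorm_pos hv)),
    inv_mul_cancel₀ (euclNorm_pos hv).ne']

theorem dotProduct_le_euclNorm_mul_euclNorm (v w : ι → ℝ) :
    v ⬝ᵥ w ≤ euclNorm v * euclNorm w := by
  simpa only [dotProduct_eq_inner, euclNorm_eq_norm] using real_inner_le_norm _ _

theorem eq_of_euclNorm_le_of_dotProduct_eq_euclNorm_sq {v w : ι → ℝ}
    (hle : euclNorm v ≤ euclNorm w) (h : v ⬝ᵥ w = euclNorm w ^ 2) : v = w := by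
  rw [euclNorm_eq_norm, euclNorm_eq_norm] at hle
  rw [euclNorm_eq_norm, dotProduct_eq_inner] at h
  exact WithLp.toLp_injective 2 (eq_of_norm_le_re_inner_eq_norm_sq (𝕜 := ℝ) hle h)

end EuclideanNorm

theorem isPik_one (k : ℕ) : IsPik k 1 :=
  ⟨natDegree_one.trans_le k.zero_le, eval_one⟩

theorem IsPik.lineMap {k : ℕ} {p q : ℝ[X]} (hp : IsPik k p) (hq : IsPik k q) (t : ℝ) :
    IsPik k (AffineMap.lineMap p q t) := by
  rw [AffineMap.lineMap_apply_module]
  refine ⟨natDegree_add_le_of_degree_le ((natDegree_smul_le _ _).trans hp.1)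
    ((natDegree_smul_le _ _).trans hq.1), ?_⟩
  rw [eval_add, eval_smul, eval_smul, hp.2, hq.2, ← add_smul, sub_add_cancel, one_smul]

section Gmres

variable {ι : Type*} [Fintype ι] [DecidableEq ι] {A : Matrix ι ι ℝ} {k : ℕ}

theorem gmresVal_le (A : Matrix ι ι ℝ) (v : ι → ℝ) {p : ℝ[X]} (hp : IsPik k p) :
    gmresVal A k v ≤ euclNorm (aeval A p *ᵥ v) :=
  csInf_le ⟨0, by rintro _ ⟨q, -, rfl⟩; exact euclNorm_nonneg _⟩ ⟨p, hp, rfl⟩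

theorem le_gmresVal {v : ι → ℝ} {a : ℝ}
    (h : ∀ p, IsPik k p → a ≤ euclNorm (aeval A p *ᵥ v)) : a ≤ gmresVal A k v :=
  le_csInf ⟨_, 1, isPik_one k, rfl⟩ (by rintro _ ⟨p, hp, rfl⟩; exact h p hp)

theorem gmresVal_le_euclNorm (A : Matrix ι ι ℝ) (k : ℕ) (v : ι → ℝ) :
    gmresVal A k v ≤ euclNorm v := by
  simpa only [map_one, one_mulVec] using gmresVal_le A v (isPik_one k)

theorem gmresVal_le_Psi {v : ι → ℝ} (hv : euclNorm v = 1) : gmresVal A k v ≤ Psi A k := by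
  refine le_csSup ⟨1, ?_⟩ ⟨v, hv, rfl⟩
  rintro _ ⟨w, hw, rfl⟩
  exact hw ▸ gmresVal_le_euclNorm A k w

theorem le_Psi_mul_euclNorm {v : ι → ℝ} {a : ℝ}
    (h : ∀ p, IsPik k p → a ≤ euclNorm (aeval A p *ᵥ v)) : a ≤ Psi A k * euclNorm v := by
  rcases eq_or_ne v 0 with rfl | hv
  · simpa only [mulVec_zero, euclNorm_zero, mul_zero] using h 1 (isPik_one k)
  have hv' := euclNorm_pos hv
  rw [← div_le_iff₀ hv']
  refine (le_gmresVal fun p hp => ?_).trans (gmresVal_le_Psi (euclNorm_inv_smul_self hv))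
  rw [mulVec_smul, euclNorm_smul, abs_of_pos (inv_pos.mpr hv'), div_eq_inv_mul]
  exact mul_le_mul_of_nonneg_left (h p hp) (inv_nonneg.mpr hv'.le)

namespace IsGmresPoly

variable {v : ι → ℝ} {p q : ℝ[X]}

theorem of_smul {c : ℝ} (hc : c ≠ 0) (hp : IsGmresPoly A k (c • v) p) : IsGmresPoly A k v p := by
  refine ⟨hp.1, fun q hq => le_of_mul_le_mul_left ?_ (abs_pos.mpr hc)⟩
  simpa only [mulVec_smul, euclNorm_smul] using hp.2 q hq

theorem of_normalized (hp : IsGmresPoly A k ((euclNorm v)⁻¹ • v) p) : IsGmresPoly A k v p := by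
  rcases eq_or_ne v 0 with rfl | hv
  · simpa only [smul_zero] using hp
  · exact hp.of_smul (inv_ne_zero (euclNorm_pos hv).ne')

theorem dotProduct_eq_euclNorm_sq (hp : IsGmresPoly A k v p) (hq : IsPik k q) :
    aeval A p *ᵥ v ⬝ᵥ aeval A q *ᵥ v = euclNorm (aeval A p *ᵥ v) ^ 2 := by
  rw [dotProduct_eq_inner, euclNorm_eq_norm]
  refine inner_eq_norm_sq_of_forall_norm_le_norm_lineMap fun t => ?_
  have hmin := hp.2 _ (hp.1.lineMap hq t)
  simpa only [AffineMap.lineMap_apply_module, map_add, map_smul, add_mulVec, smul_mulVec,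
    euclNorm_eq_norm, WithLp.toLp_add, WithLp.toLp_smul] using hmin

theorem euclNorm_sq_le_of_transpose (hq : IsGmresPoly Aᵀ k v q) (hp : IsPik k p) :
    euclNorm (aeval Aᵀ q *ᵥ v) ^ 2 ≤
      euclNorm (aeval A p *ᵥ aeval Aᵀ q *ᵥ v) * euclNorm v := by
  rw [← hq.dotProduct_eq_euclNorm_sq hp, ← aeval_mulVec_dotProduct]
  exact dotProduct_le_euclNorm_mul_euclNorm _ _

theorem euclNorm_le_Psi_mul_of_transpose (hq : IsGmresPoly Aᵀ k v q) :
    euclNorm (aeval Aᵀ q *ᵥ v) ≤ Psi A k * euclNorm v := by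
  rcases eq_or_ne v 0 with rfl | hv
  · rw [mulVec_zero, euclNorm_zero, mul_zero]
  rcases eq_or_ne (aeval Aᵀ q *ᵥ v) 0 with hs | hs
  · rw [hs, euclNorm_zero]
    exact le_Psi_mul_euclNorm fun p _ => euclNorm_nonneg _
  have hquot : euclNorm (aeval Aᵀ q *ᵥ v) ^ 2 / euclNorm v ≤
      Psi A k * euclNorm (aeval Aᵀ q *ᵥ v) :=
    le_Psi_mul_euclNorm fun p hp =>
      (div_le_iff₀ (euclNorm_pos hv)).mpr (hq.euclNorm_sq_le_of_transpose hp)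
  rw [div_le_iff₀ (euclNorm_pos hv)] at hquot
  refine le_of_mul_le_mul_right ?_ (euclNorm_pos hs)
  linarith

theorem dotProduct_transpose_eq_euclNorm_sq (hp : IsGmresPoly A k v p) (hq : IsPik k q) :
    aeval Aᵀ q *ᵥ aeval A p *ᵥ v ⬝ᵥ v = euclNorm (aeval A p *ᵥ v) ^ 2 := by
  rw [aeval_mulVec_dotProduct, transpose_transpose, hp.dotProduct_eq_euclNorm_sq hq]

end IsGmresPoly

theorem worst_case_eigenvector_general {b : ι → ℝ} {p q : ℝ[X]} (hp : IsGmresPoly A k b p)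
    (hwc : euclNorm (aeval A p *ᵥ b) = Psi A k * euclNorm b)
    (hq : IsGmresPoly Aᵀ k (aeval A p *ᵥ b) q) :
    aeval Aᵀ q *ᵥ aeval A p *ᵥ b = Psi A k ^ 2 • b := by
  have hnorm : euclNorm (Psi A k ^ 2 • b) = Psi A k ^ 2 * euclNorm b := by
    rw [euclNorm_smul, abs_of_nonneg (sq_nonneg _)]
  apply eq_of_euclNorm_le_of_dotProduct_eq_euclNorm_sq
  · calc euclNorm (aeval Aᵀ q *ᵥ aeval A p *ᵥ b)
        ≤ Psi A k * euclNorm (aeval A p *ᵥ b) := hq.euclNorm_le_Psi_mul_of_transpose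
      _ = euclNorm (Psi A k ^ 2 • b) := by rw [hwc, hnorm, sq, mul_assoc]
  · calc aeval Aᵀ q *ᵥ aeval A p *ᵥ b ⬝ᵥ Psi A k ^ 2 • b
        = Psi A k ^ 2 * euclNorm (aeval A p *ᵥ b) ^ 2 := by
          rw [dotProduct_smul, hp.dotProduct_transpose_eq_euclNorm_sq hq.1, smul_eq_mul]
      _ = euclNorm (Psi A k ^ 2 • b) ^ 2 := by rw [hwc, hnorm]; ring

end Gmres

/-- For a unit norm `k`-th worst-case GMRES initial vector `b` with worst-case
GMRES polynomial `p_k`, residual `r = p_k(A)b`, and `q_k` the `k`-th GMRES polynomial of `Aᵀ`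
and `r/‖r‖`, one has `q_k(Aᵀ)p_k(A)b = Ψ_k(A)² b`. -/
theorem worst_case_eigenvector {n : ℕ} (A : Matrix (Fin n) (Fin n) ℝ)
    (hA : IsUnit A) (k : ℕ) (hk1 : 1 ≤ k) (hk2 : k ≤ dA A - 1)
    (b : Fin n → ℝ) (hb : euclNorm b = 1)
    (pk : Polynomial ℝ) (hpk : IsGmresPoly A k b pk)
    (hwc : euclNorm ((Polynomial.aeval A pk).mulVec b) = Psi A k)
    (r : Fin n → ℝ) (hr : r = (Polynomial.aeval A pk).mulVec b)
    (qk : Polynomial ℝ) (hqk : IsGmresPoly Aᵀ k ((euclNorm r)⁻¹ • r) qk) :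
    (Polynomial.aeval Aᵀ qk).mulVec ((Polynomial.aeval A pk).mulVec b)
      = (Psi A k ^ 2) • b := by
  subst hr
  exact worst_case_eigenvector_general hpk (by rw [hwc, hb, mul_one]) hqk.of_normalized
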